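/- arXiv:2104.04589 — 2 statements merged into one kernel-verified Lean document; each statement's English description precedes it below -/
import Mathlib

section
/- Strong normalization of λPRK: every typable term of λPRK is strongly normalizing, i.e., if Γ ⊢ t : P is derivable then there is no infinite reduction sequence t → t₁ → t₂ → ⋯ starting from t. -/
/-!
Strong normalization is proved by reducibility candidates, over untyped terms.

A candidate is a set `Cl W`: the least set containing every term that is either neutral (not an
introduction form) or satisfies `W`, and whose one-step reducts all lie in the set. Such sets
consist of strongly normalizing terms, are closed under reduction, and contain every neutral term
whose reducts they contain. A strong type is interpreted by taking for `W` the introduction forms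
of that type whose immediate subterms lie in the candidates of the (classical) premises.

The classical types satisfy `A⊕ ≅ (A⊖ → A⁺)` and `A⊖ ≅ (A⊕ → A⁻)`, a mutual recursion that is not
well founded. Since the arrow is antitone in its domain, `X ↦ ((X → A⁻) → A⁺)` is monotone, so its
least fixed point (Knaster–Tarski) interprets `A⊕`, and then `A⊖` is the arrow `A⊕ → A⁻`; both
equations hold (`classicalInterp_eq`).

The term `abs_Q(t,s)` is neutral and reduces only to terms of the same shape, so it lies in every
candidate as soon as it is strongly normalizing. This is shown for `t`, `s` in the candidates of
`A⁺`, `A⁻` by induction on `A` (`abs_sn`): a root step leads to `abs(t' • s', s' • t')` with `t'`, `s'`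
in the candidates of the two classical types of an immediate subformula, so the two applications
lie in the strong candidates of this subformula.

The fundamental lemma (`fundamental`) then puts every substitution instance of a typable term by
reducible terms in the candidate of its type; variables belong to all candidates.
-/

/-- Pure propositions: A ::= α | A∧B | A∨B | ¬A -/
inductive PureProp : Type
  | var : ℕ → PureProp
  | conj : PureProp → PureProp → PureProp
  | disj : PureProp → PureProp → PureProp
  | neg : PureProp → PureProp
  deriving DecidableEq

/-- Moded propositions: A⁺ (sp), A⁻ (sn), A⊕ (cp), A⊖ (cn). -/
inductive MProp : Type
  | sp : PureProp → MProp
  | sn : PureProp → MProp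
  | cp : PureProp → MProp
  | cn : PureProp → MProp
  deriving DecidableEq

/-- The opposite P~: flips the sign, keeps the strength. -/
def MProp.opp : MProp → MProp
  | .sp A => .sn A
  | .sn A => .sp A
  | .cp A => .cn A
  | .cn A => .cp A

def MProp.isStrong : MProp → Prop
  | .sp _ => True
  | .sn _ => True
  | .cp _ => False
  | .cn _ => False

def MProp.isClassical : MProp → Prop
  | .sp _ => False
  | .sn _ => False
  | .cp _ => True
  | .cn _ => True

inductive Sign : Type | pos | neg
  deriving DecidableEq

def Sign.flip : Sign → Sign
  | .pos => .neg
  | .neg => .pos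

/-- Terms of λPRK, with de Bruijn indices for bound variables
    (a faithful rendering of terms modulo α-renaming). -/
inductive Tm : Type
  | var : ℕ → Tm
  | abs : MProp → Tm → Tm → Tm                    -- abs_P(t,s)
  | pair : Sign → Tm → Tm → Tm                    -- ⟨t,s⟩±
  | proj : Sign → Bool → Tm → Tm                  -- πᵢ±(t), i encoded by a Bool
  | inj : Sign → Bool → Tm → Tm                   -- inᵢ±(t)
  | case : Sign → Tm → MProp → Tm → MProp → Tm → Tm  -- case±(t, x:P.s, y:Q.u)
  | negi : Sign → Tm → Tm                         -- ¬i±(t)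
  | nege : Sign → Tm → Tm                         -- ¬e±(t)
  | lam : Sign → MProp → Tm → Tm                  -- λ±x:P.t
  | app : Sign → Tm → Tm → Tm                     -- t •± s
  deriving DecidableEq

/-- Shift free de Bruijn indices ≥ c up by d. -/
def Tm.shift (d : ℕ) : ℕ → Tm → Tm
  | c, .var k => if k < c then .var k else .var (k + d)
  | c, .abs P t s => .abs P (Tm.shift d c t) (Tm.shift d c s)
  | c, .pair sg t s => .pair sg (Tm.shift d c t) (Tm.shift d c s)
  | c, .proj sg i t => .proj sg i (Tm.shift d c t)
  | c, .inj sg i t => .inj sg i (Tm.shift d c t)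
  | c, .case sg t P s Q u =>
      .case sg (Tm.shift d c t) P (Tm.shift d (c+1) s) Q (Tm.shift d (c+1) u)
  | c, .negi sg t => .negi sg (Tm.shift d c t)
  | c, .nege sg t => .nege sg (Tm.shift d c t)
  | c, .lam sg P t => .lam sg P (Tm.shift d (c+1) t)
  | c, .app sg t s => .app sg (Tm.shift d c t) (Tm.shift d c s)

/-- Capture-avoiding substitution t[j := s]. -/
def Tm.subst : Tm → ℕ → Tm → Tm
  | .var k, j, s => if k = j then s else if j < k then .var (k - 1) else .var k
  | .abs P t u, j, s => .abs P (Tm.subst t j s) (Tm.subst u j s)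
  | .pair sg t u, j, s => .pair sg (Tm.subst t j s) (Tm.subst u j s)
  | .proj sg i t, j, s => .proj sg i (Tm.subst t j s)
  | .inj sg i t, j, s => .inj sg i (Tm.subst t j s)
  | .case sg t P u Q v, j, s =>
      .case sg (Tm.subst t j s) P (Tm.subst u (j+1) (Tm.shift 1 0 s)) Q (Tm.subst v (j+1) (Tm.shift 1 0 s))
  | .negi sg t, j, s => .negi sg (Tm.subst t j s)
  | .nege sg t, j, s => .nege sg (Tm.subst t j s)
  | .lam sg P t, j, s => .lam sg P (Tm.subst t (j+1) (Tm.shift 1 0 s))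
  | .app sg t u, j, s => .app sg (Tm.subst t j s) (Tm.subst u j s)

/-- abs'(t,s): for t of classical type of sign sg and s of the opposite classical type,
    abs'(t,s) = abs(t •sg s, s •(flip sg) t). -/
def absE (Q : MProp) (sg : Sign) (t s : Tm) : Tm :=
  Tm.abs Q (Tm.app sg t s) (Tm.app sg.flip s t)

/-- One-step reduction of λPRK, closed under arbitrary contexts. -/
inductive Red : Tm → Tm → Prop
  | proj1 {sg t1 t2} : Red (.proj sg false (.pair sg t1 t2)) t1
  | proj2 {sg t1 t2} : Red (.proj sg true (.pair sg t1 t2)) t2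
  | case1 {sg t P Q s1 s2} : Red (.case sg (.inj sg false t) P s1 Q s2) (Tm.subst s1 0 t)
  | case2 {sg t P Q s1 s2} : Red (.case sg (.inj sg true t) P s1 Q s2) (Tm.subst s2 0 t)
  | negRed {sg t} : Red (.nege sg (.negi sg t)) t
  | beta {sg P t s} : Red (.app sg (.lam sg P t) s) (Tm.subst t 0 s)
  | absPairInj1 {Q sg t1 t2 s} :
      Red (.abs Q (.pair sg t1 t2) (.inj sg.flip false s)) (absE Q sg t1 s)
  | absPairInj2 {Q sg t1 t2 s} :
      Red (.abs Q (.pair sg t1 t2) (.inj sg.flip true s)) (absE Q sg t2 s)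
  | absInjPair1 {Q sg t s1 s2} :
      Red (.abs Q (.inj sg false t) (.pair sg.flip s1 s2)) (absE Q sg t s1)
  | absInjPair2 {Q sg t s1 s2} :
      Red (.abs Q (.inj sg true t) (.pair sg.flip s1 s2)) (absE Q sg t s2)
  | absNeg {Q sg t s} :
      Red (.abs Q (.negi sg t) (.negi sg.flip s)) (absE Q sg.flip t s)
  | absCL {Q t t' s} : Red t t' → Red (.abs Q t s) (.abs Q t' s)
  | absCR {Q t s s'} : Red s s' → Red (.abs Q t s) (.abs Q t s')
  | pairCL {sg t t' s} : Red t t' → Red (.pair sg t s) (.pair sg t' s)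
  | pairCR {sg t s s'} : Red s s' → Red (.pair sg t s) (.pair sg t s')
  | projC {sg i t t'} : Red t t' → Red (.proj sg i t) (.proj sg i t')
  | injC {sg i t t'} : Red t t' → Red (.inj sg i t) (.inj sg i t')
  | caseC1 {sg t t' P s Q u} : Red t t' → Red (.case sg t P s Q u) (.case sg t' P s Q u)
  | caseC2 {sg t P s s' Q u} : Red s s' → Red (.case sg t P s Q u) (.case sg t P s' Q u)
  | caseC3 {sg t P s Q u u'} : Red u u' → Red (.case sg t P s Q u) (.case sg t P s Q u')
  | negiC {sg t t'} : Red t t' → Red (.negi sg t) (.negi sg t')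
  | negeC {sg t t'} : Red t t' → Red (.nege sg t) (.nege sg t')
  | lamC {sg P t t'} : Red t t' → Red (.lam sg P t) (.lam sg P t')
  | appCL {sg t t' s} : Red t t' → Red (.app sg t s) (.app sg t' s)
  | appCR {sg t s s'} : Red s s' → Red (.app sg t s) (.app sg t s')

/-- Zero-or-more-step reduction. -/
def RedStar : Tm → Tm → Prop := Relation.ReflTransGen Red

/-- The λPRK typing judgment Γ ⊢ t : P.  Contexts are lists (de Bruijn). -/
inductive TJ : List MProp → Tm → MProp → Prop
  | var {Γ : List MProp} {n P} : Γ[n]? = some P → TJ Γ (.var n) P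
  | absT {Γ t s P Q} : MProp.isStrong P → TJ Γ t P → TJ Γ s P.opp → TJ Γ (.abs Q t s) Q
  | pairP {Γ t s A B} : TJ Γ t (MProp.cp A) → TJ Γ s (MProp.cp B) →
      TJ Γ (.pair .pos t s) (MProp.sp (PureProp.conj A B))
  | pairN {Γ t s A B} : TJ Γ t (MProp.cn A) → TJ Γ s (MProp.cn B) →
      TJ Γ (.pair .neg t s) (MProp.sn (PureProp.disj A B))
  | projP1 {Γ t A B} : TJ Γ t (MProp.sp (PureProp.conj A B)) → TJ Γ (.proj .pos false t) (MProp.cp A)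
  | projP2 {Γ t A B} : TJ Γ t (MProp.sp (PureProp.conj A B)) → TJ Γ (.proj .pos true t) (MProp.cp B)
  | projN1 {Γ t A B} : TJ Γ t (MProp.sn (PureProp.disj A B)) → TJ Γ (.proj .neg false t) (MProp.cn A)
  | projN2 {Γ t A B} : TJ Γ t (MProp.sn (PureProp.disj A B)) → TJ Γ (.proj .neg true t) (MProp.cn B)
  | injP1 {Γ t A B} : TJ Γ t (MProp.cp A) → TJ Γ (.inj .pos false t) (MProp.sp (PureProp.disj A B))
  | injP2 {Γ t A B} : TJ Γ t (MProp.cp B) → TJ Γ (.inj .pos true t) (MProp.sp (PureProp.disj A B))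
  | injN1 {Γ t A B} : TJ Γ t (MProp.cn A) → TJ Γ (.inj .neg false t) (MProp.sn (PureProp.conj A B))
  | injN2 {Γ t A B} : TJ Γ t (MProp.cn B) → TJ Γ (.inj .neg true t) (MProp.sn (PureProp.conj A B))
  | caseP {Γ t s u A B P} : TJ Γ t (MProp.sp (PureProp.disj A B)) →
      TJ (MProp.cp A :: Γ) s P → TJ (MProp.cp B :: Γ) u P →
      TJ Γ (.case .pos t (MProp.cp A) s (MProp.cp B) u) P
  | caseN {Γ t s u A B P} : TJ Γ t (MProp.sn (PureProp.conj A B)) →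
      TJ (MProp.cn A :: Γ) s P → TJ (MProp.cn B :: Γ) u P →
      TJ Γ (.case .neg t (MProp.cn A) s (MProp.cn B) u) P
  | negiP {Γ t A} : TJ Γ t (MProp.cn A) → TJ Γ (.negi .pos t) (MProp.sp (PureProp.neg A))
  | negiN {Γ t A} : TJ Γ t (MProp.cp A) → TJ Γ (.negi .neg t) (MProp.sn (PureProp.neg A))
  | negeP {Γ t A} : TJ Γ t (MProp.sp (PureProp.neg A)) → TJ Γ (.nege .pos t) (MProp.cn A)
  | negeN {Γ t A} : TJ Γ t (MProp.sn (PureProp.neg A)) → TJ Γ (.nege .neg t) (MProp.cp A)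
  | lamP {Γ t A} : TJ (MProp.cn A :: Γ) t (MProp.sp A) → TJ Γ (.lam .pos (MProp.cn A) t) (MProp.cp A)
  | lamN {Γ t A} : TJ (MProp.cp A :: Γ) t (MProp.sn A) → TJ Γ (.lam .neg (MProp.cp A) t) (MProp.cn A)
  | appP {Γ t s A} : TJ Γ t (MProp.cp A) → TJ Γ s (MProp.cn A) → TJ Γ (.app .pos t s) (MProp.sp A)
  | appN {Γ t s A} : TJ Γ t (MProp.cn A) → TJ Γ s (MProp.cp A) → TJ Γ (.app .neg t s) (MProp.sn A)

/-! ### Parallel substitution -/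

/-- Lifting of a renaming under a binder. -/
def liftRen (ρ : ℕ → ℕ) : ℕ → ℕ
  | 0 => 0
  | k + 1 => ρ k + 1

/-- Simultaneous renaming of the free variables of a term. -/
def Tm.ren : Tm → (ℕ → ℕ) → Tm
  | .var k, ρ => .var (ρ k)
  | .abs P t u, ρ => .abs P (t.ren ρ) (u.ren ρ)
  | .pair sg t u, ρ => .pair sg (t.ren ρ) (u.ren ρ)
  | .proj sg i t, ρ => .proj sg i (t.ren ρ)
  | .inj sg i t, ρ => .inj sg i (t.ren ρ)
  | .case sg t P u Q v, ρ => .case sg (t.ren ρ) P (u.ren (liftRen ρ)) Q (v.ren (liftRen ρ))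
  | .negi sg t, ρ => .negi sg (t.ren ρ)
  | .nege sg t, ρ => .nege sg (t.ren ρ)
  | .lam sg P t, ρ => .lam sg P (t.ren (liftRen ρ))
  | .app sg t u, ρ => .app sg (t.ren ρ) (u.ren ρ)

/-- Lifting of a parallel substitution under a binder. -/
def liftSub (σ : ℕ → Tm) : ℕ → Tm
  | 0 => .var 0
  | k + 1 => (σ k).ren Nat.succ

/-- Simultaneous capture-avoiding substitution for the free variables of a term. -/
def Tm.psub : Tm → (ℕ → Tm) → Tm
  | .var k, σ => σ k
  | .abs P t u, σ => .abs P (t.psub σ) (u.psub σ)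
  | .pair sg t u, σ => .pair sg (t.psub σ) (u.psub σ)
  | .proj sg i t, σ => .proj sg i (t.psub σ)
  | .inj sg i t, σ => .inj sg i (t.psub σ)
  | .case sg t P u Q v, σ => .case sg (t.psub σ) P (u.psub (liftSub σ)) Q (v.psub (liftSub σ))
  | .negi sg t, σ => .negi sg (t.psub σ)
  | .nege sg t, σ => .nege sg (t.psub σ)
  | .lam sg P t, σ => .lam sg P (t.psub (liftSub σ))
  | .app sg t u, σ => .app sg (t.psub σ) (u.psub σ)

/-- Extension of a parallel substitution by a term for the variable 0. -/
def consSub (s : Tm) (σ : ℕ → Tm) : ℕ → Tm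
  | 0 => s
  | k + 1 => σ k

theorem shift_eq_ren (t : Tm) (c : ℕ) :
    Tm.shift 1 c t = t.ren (fun k => if k < c then k else k + 1) := by
  have hl : ∀ c : ℕ, liftRen (fun k => if k < c then k else k + 1)
      = fun k => if k < c + 1 then k else k + 1 := by
    intro c; funext k
    cases k with
    | zero => simp [liftRen]
    | succ k => simp only [liftRen]; split_ifs <;> omega
  induction t generalizing c <;> simp_all only [Tm.shift, Tm.ren]
  split_ifs <;> rfl

theorem shift_zero_eq_ren (t : Tm) : Tm.shift 1 0 t = t.ren Nat.succ := by
  rw [shift_eq_ren]; rfl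

theorem subst_eq_psub_aux (t : Tm) (j : ℕ) (s : Tm) :
    Tm.subst t j s
      = t.psub (fun k => if k = j then s else if j < k then .var (k - 1) else .var k) := by
  have hl : ∀ (j : ℕ) (s : Tm),
      liftSub (fun k => if k = j then s else if j < k then .var (k - 1) else .var k)
      = fun k => if k = j + 1 then Tm.shift 1 0 s
          else if j + 1 < k then .var (k - 1) else .var k := by
    intro j s; funext k
    cases k with
    | zero => simp [liftSub]
    | succ k =>
      simp only [liftSub, shift_zero_eq_ren]
      split_ifs <;> first | omega | rfl | (simp only [Tm.ren]; congr 1; omega)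
  induction t generalizing j s <;> simp_all only [Tm.subst, Tm.psub]

theorem subst_eq_psub (t s : Tm) : Tm.subst t 0 s = t.psub (consSub s Tm.var) := by
  rw [subst_eq_psub_aux]
  congr 1; funext k
  cases k <;> simp [consSub]

theorem ren_ren (t : Tm) (ρ ρ' : ℕ → ℕ) : (t.ren ρ).ren ρ' = t.ren (fun k => ρ' (ρ k)) := by
  have hl : ∀ ρ ρ' : ℕ → ℕ, (fun k => liftRen ρ' (liftRen ρ k)) = liftRen (fun k => ρ' (ρ k)) := by
    intro ρ ρ'; funext k; cases k <;> rfl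
  induction t generalizing ρ ρ' <;> simp_all only [Tm.ren]

theorem ren_psub (t : Tm) (ρ : ℕ → ℕ) (σ : ℕ → Tm) :
    (t.ren ρ).psub σ = t.psub (fun k => σ (ρ k)) := by
  have hl : ∀ (ρ : ℕ → ℕ) (σ : ℕ → Tm),
      (fun k => liftSub σ (liftRen ρ k)) = liftSub (fun k => σ (ρ k)) := by
    intro ρ σ; funext k; cases k <;> rfl
  induction t generalizing ρ σ <;> simp_all only [Tm.ren, Tm.psub]

theorem psub_ren (t : Tm) (σ : ℕ → Tm) (ρ : ℕ → ℕ) :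
    (t.psub σ).ren ρ = t.psub (fun k => (σ k).ren ρ) := by
  have hl : ∀ (σ : ℕ → Tm) (ρ : ℕ → ℕ),
      (fun k => (liftSub σ k).ren (liftRen ρ)) = liftSub (fun k => (σ k).ren ρ) := by
    intro σ ρ; funext k
    cases k with
    | zero => rfl
    | succ k => simp only [liftSub, ren_ren]; rfl
  induction t generalizing ρ σ <;> simp_all only [Tm.ren, Tm.psub]

theorem psub_psub (t : Tm) (σ τ : ℕ → Tm) :
    (t.psub σ).psub τ = t.psub (fun k => (σ k).psub τ) := by
  have hl : ∀ σ τ : ℕ → Tm,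
      (fun k => (liftSub σ k).psub (liftSub τ)) = liftSub (fun k => (σ k).psub τ) := by
    intro σ τ; funext k
    cases k with
    | zero => rfl
    | succ k => simp only [liftSub, ren_psub, psub_ren]
  induction t generalizing σ τ <;> simp_all only [Tm.psub]

theorem psub_var (t : Tm) : t.psub Tm.var = t := by
  have hl : liftSub Tm.var = Tm.var := by
    funext k; cases k <;> rfl
  induction t <;> simp_all only [Tm.psub]

theorem subst_psub_lift (t s : Tm) (σ : ℕ → Tm) :
    Tm.subst (t.psub (liftSub σ)) 0 s = t.psub (consSub s σ) := by
  rw [subst_eq_psub, psub_psub]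
  congr 1; funext k
  cases k with
  | zero => rfl
  | succ k =>
    simp only [liftSub, ren_psub, consSub]
    exact psub_var _

theorem psub_subst (t s : Tm) (σ : ℕ → Tm) :
    (Tm.subst t 0 s).psub σ = Tm.subst (t.psub (liftSub σ)) 0 (s.psub σ) := by
  rw [subst_psub_lift, subst_eq_psub, psub_psub]
  congr 1; funext k
  cases k <;> rfl

theorem Red.psub {t t' : Tm} (h : Red t t') (σ : ℕ → Tm) : Red (t.psub σ) (t'.psub σ) := by
  induction h generalizing σ <;>
    simp only [psub_subst, Tm.psub, absE] <;>
    first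
      | (constructor; done)
      | (constructor; apply_assumption)

theorem Red.subst {t t' : Tm} (h : Red t t') (s : Tm) :
    Red (Tm.subst t 0 s) (Tm.subst t' 0 s) := by
  rw [subst_eq_psub, subst_eq_psub]; exact h.psub _

/-! ### Strong normalization and candidates -/

/-- Strong normalization, as accessibility for the converse of reduction. -/
def SN (t : Tm) : Prop := Acc (fun a b => Red b a) t

theorem SN.of_psub {t : Tm} {σ : ℕ → Tm} (h : SN (t.psub σ)) : SN t := by
  generalize hu : t.psub σ = u at h
  induction h generalizing t with
  | intro u _ ih =>
    subst hu
    exact ⟨_, fun t' ht' => ih _ (ht'.psub σ) rfl⟩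

theorem SN.of_subst {t s : Tm} (h : SN (Tm.subst t 0 s)) : SN t := by
  rw [subst_eq_psub] at h; exact h.of_psub

/-- Neutral terms: those that are not introduction forms. -/
def Neutral : Tm → Prop
  | .var _ => True
  | .abs _ _ _ => True
  | .pair _ _ _ => False
  | .proj _ _ _ => True
  | .inj _ _ _ => False
  | .case _ _ _ _ _ _ => True
  | .negi _ _ => False
  | .nege _ _ => True
  | .lam _ _ _ => False
  | .app _ _ _ => True

/-- The candidate generated by a predicate `W` on introduction forms: the strongly normalizing
terms all of whose reducts (including the term itself) are neutral or satisfy `W`. -/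
inductive Cl (W : Tm → Prop) : Tm → Prop
  | intro {t : Tm} : (Neutral t ∨ W t) → (∀ t', Red t t' → Cl W t') → Cl W t

theorem Cl.sn {W : Tm → Prop} {t : Tm} (h : Cl W t) : SN t := by
  induction h with
  | intro _ _ ih => exact ⟨_, ih⟩

theorem Cl.red {W : Tm → Prop} {t t' : Tm} (h : Cl W t) (r : Red t t') : Cl W t' := by
  cases h with
  | intro _ h => exact h _ r

theorem Cl.head {W : Tm → Prop} {t : Tm} (h : Cl W t) : Neutral t ∨ W t := by
  cases h with
  | intro h _ => exact h

theorem Cl.mono {W W' : Tm → Prop} (hW : ∀ t, W t → W' t) {t : Tm} (h : Cl W t) : Cl W' t := by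
  induction h with
  | intro h _ ih => exact .intro (h.imp_right (hW _)) ih

theorem Cl.var {W : Tm → Prop} (n : ℕ) : Cl W (.var n) :=
  .intro (.inl trivial) (fun _ r => nomatch r)

/-- Pairs of sign `sg` with components in `X` and `Y`. -/
def WPair (sg : Sign) (X Y : Tm → Prop) (t : Tm) : Prop :=
  ∃ t₁ t₂, t = .pair sg t₁ t₂ ∧ X t₁ ∧ Y t₂

/-- Injections of sign `sg` of a term in `X` (first injection) or `Y` (second injection). -/
def WInj (sg : Sign) (X Y : Tm → Prop) (t : Tm) : Prop :=
  ∃ i u, t = .inj sg i u ∧ bif i then Y u else X u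

/-- Negation introductions of sign `sg` applied to a term in `X`. -/
def WNeg (sg : Sign) (X : Tm → Prop) (t : Tm) : Prop :=
  ∃ u, t = .negi sg u ∧ X u

/-- Abstractions of sign `sg` whose body sends terms in `X` to terms in `S`. -/
def WLam (sg : Sign) (X S : Tm → Prop) (t : Tm) : Prop :=
  ∃ P b, t = .lam sg P b ∧ ∀ s, X s → S (Tm.subst b 0 s)

theorem Cl.lam_antitone {sg : Sign} {X X' S : Tm → Prop} (h : X ≤ X') :
    Cl (WLam sg X' S) ≤ Cl (WLam sg X S) := fun _ ht =>
  ht.mono fun _ ⟨P, b, e, hb⟩ => ⟨P, b, e, fun s hs => hb s (h s hs)⟩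

/-! ### Interpretation of types -/

/-- The monotone operator `X ↦ ((X → S⁻) → S⁺)`. -/
def classicalOp (S : Sign → Tm → Prop) : (Tm → Prop) →o (Tm → Prop) where
  toFun X := Cl (WLam .pos (Cl (WLam .neg X (S .neg))) (S .pos))
  monotone' _ _ h := Cl.lam_antitone (Cl.lam_antitone h)

/-- The candidates of `A⊕` and `A⊖`, given those of `A⁺` and `A⁻`. -/
def classicalInterp (S : Sign → Tm → Prop) : Sign → Tm → Prop
  | .pos => (classicalOp S).lfp
  | .neg => Cl (WLam .neg (classicalOp S).lfp (S .neg))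

theorem classicalInterp_eq (S : Sign → Tm → Prop) (sg : Sign) :
    classicalInterp S sg = Cl (WLam sg (classicalInterp S sg.flip) (S sg)) := by
  cases sg with
  | pos => exact (classicalOp S).map_lfp.symm
  | neg => rfl

/-- The candidates of `A⁺` and `A⁻`. -/
def strongInterp : PureProp → Sign → Tm → Prop
  | .var _, _ => Cl fun _ => False
  | .conj A B, .pos =>
      Cl (WPair .pos (classicalInterp (strongInterp A) .pos) (classicalInterp (strongInterp B) .pos))
  | .conj A B, .neg =>
      Cl (WInj .neg (classicalInterp (strongInterp A) .neg) (classicalInterp (strongInterp B) .neg))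
  | .disj A B, .pos =>
      Cl (WInj .pos (classicalInterp (strongInterp A) .pos) (classicalInterp (strongInterp B) .pos))
  | .disj A B, .neg =>
      Cl (WPair .neg (classicalInterp (strongInterp A) .neg) (classicalInterp (strongInterp B) .neg))
  | .neg A, sg => Cl (WNeg sg (classicalInterp (strongInterp A) sg.flip))

/-- The candidate interpreting a moded proposition. -/
def interp : MProp → Tm → Prop
  | .sp A => strongInterp A .pos
  | .sn A => strongInterp A .neg
  | .cp A => classicalInterp (strongInterp A) .pos
  | .cn A => classicalInterp (strongInterp A) .neg

/-- The sets of the form `Cl W`. -/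
def IsCand (X : Tm → Prop) : Prop := ∃ W, X = Cl W

theorem isCand_classical (S : Sign → Tm → Prop) (sg : Sign) : IsCand (classicalInterp S sg) :=
  ⟨_, classicalInterp_eq S sg⟩

theorem isCand_strong (A : PureProp) (sg : Sign) : IsCand (strongInterp A sg) := by
  cases A <;> cases sg <;> exact ⟨_, rfl⟩

theorem isCand_interp (P : MProp) : IsCand (interp P) := by
  cases P with
  | sp A => exact isCand_strong A .pos
  | sn A => exact isCand_strong A .neg
  | cp A => exact isCand_classical (strongInterp A) .pos
  | cn A => exact isCand_classical (strongInterp A) .neg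

theorem IsCand.sn {X : Tm → Prop} (hX : IsCand X) {t : Tm} (h : X t) : SN t := by
  obtain ⟨W, rfl⟩ := hX; exact h.sn

theorem IsCand.red {X : Tm → Prop} (hX : IsCand X) {t t' : Tm} (h : X t) (r : Red t t') : X t' := by
  obtain ⟨W, rfl⟩ := hX; exact h.red r

theorem IsCand.var {X : Tm → Prop} (hX : IsCand X) (n : ℕ) : X (.var n) := by
  obtain ⟨W, rfl⟩ := hX; exact .var n

theorem IsCand.neutral {X : Tm → Prop} (hX : IsCand X) {t : Tm} (hn : Neutral t)
    (h : ∀ t', Red t t' → X t') : X t := by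
  obtain ⟨W, rfl⟩ := hX; exact .intro (.inl hn) h

/-! ### Introductions and eliminations preserve candidates -/

theorem cl_pair {sg : Sign} {X Y : Tm → Prop} (hX : IsCand X) (hY : IsCand Y) {t s : Tm}
    (ht : X t) (hs : Y s) : Cl (WPair sg X Y) (.pair sg t s) := by
  have h1 := hX.sn ht
  have h2 := hY.sn hs
  induction h1 generalizing s with
  | intro t _ iht =>
    induction h2 with
    | intro s hsa ihs =>
      refine .intro (.inr ⟨t, s, rfl, ht, hs⟩) fun r hr => ?_
      cases hr with
      | pairCL h => exact iht _ h (hX.red ht h) hs ⟨_, hsa⟩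
      | pairCR h => exact ihs _ h (hY.red hs h)

theorem cl_inj {sg : Sign} {X Y : Tm → Prop} (hX : IsCand X) (hY : IsCand Y) {i : Bool} {t : Tm}
    (ht : bif i then Y t else X t) : Cl (WInj sg X Y) (.inj sg i t) := by
  have h1 : SN t := by
    cases i
    · exact hX.sn ht
    · exact hY.sn ht
  induction h1 with
  | intro t _ iht =>
    refine .intro (.inr ⟨i, t, rfl, ht⟩) fun r hr => ?_
    cases hr with
    | injC h =>
      refine iht _ h ?_
      cases i
      · exact hX.red ht h
      · exact hY.red ht h

theorem cl_negi {sg : Sign} {X : Tm → Prop} (hX : IsCand X) {t : Tm} (ht : X t) :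
    Cl (WNeg sg X) (.negi sg t) := by
  have h1 := hX.sn ht
  induction h1 with
  | intro t _ iht =>
    refine .intro (.inr ⟨t, rfl, ht⟩) fun r hr => ?_
    cases hr with
    | negiC h => exact iht _ h (hX.red ht h)

theorem cl_lam {sg : Sign} {X S : Tm → Prop} (hX : IsCand X) (hS : IsCand S) {P : MProp} {b : Tm}
    (hb : ∀ s, X s → S (Tm.subst b 0 s)) : Cl (WLam sg X S) (.lam sg P b) := by
  -- A variable instantiates the bound variable, as variables belong to every candidate.
  have h1 : SN b := (hS.sn (hb _ (hX.var 0))).of_subst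
  induction h1 with
  | intro b _ ih =>
    refine .intro (.inr ⟨P, b, rfl, hb⟩) fun r hr => ?_
    cases hr with
    | lamC h => exact ih _ h fun s hs => hS.red (hb s hs) (h.subst s)

theorem cl_proj {sg : Sign} {X Y : Tm → Prop} (hX : IsCand X) (hY : IsCand Y) {t : Tm}
    (ht : Cl (WPair sg X Y) t) : X (.proj sg false t) ∧ Y (.proj sg true t) := by
  induction ht with
  | @intro t hd _ ih =>
    constructor
    · refine hX.neutral trivial fun r hr => ?_
      cases hr with
      | proj1 =>
        rcases hd with hd | ⟨_, _, e, h1, h2⟩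
        · exact hd.elim
        · cases e; exact h1
      | projC h => exact (ih _ h).1
    · refine hY.neutral trivial fun r hr => ?_
      cases hr with
      | proj2 =>
        rcases hd with hd | ⟨_, _, e, h1, h2⟩
        · exact hd.elim
        · cases e; exact h2
      | projC h => exact (ih _ h).2

theorem cl_nege {sg : Sign} {X : Tm → Prop} (hX : IsCand X) {t : Tm}
    (ht : Cl (WNeg sg X) t) : X (.nege sg t) := by
  induction ht with
  | @intro t hd _ ih =>
    refine hX.neutral trivial fun r hr => ?_
    cases hr with
    | negRed =>
      rcases hd with hd | ⟨_, e, h⟩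
      · exact hd.elim
      · cases e; exact h
    | negeC h => exact ih _ h

theorem cl_app {sg : Sign} {X S : Tm → Prop} (hX : IsCand X) (hS : IsCand S) {t s : Tm}
    (ht : Cl (WLam sg X S) t) (hs : X s) : S (.app sg t s) := by
  have h2 := hX.sn hs
  induction ht generalizing s with
  | @intro t hd _ iht =>
    induction h2 with
    | intro s hsa ihs =>
      refine hS.neutral trivial fun r hr => ?_
      cases hr with
      | beta =>
        rcases hd with hd | ⟨_, _, e, h⟩
        · exact hd.elim
        · cases e; exact h s hs
      | appCL h => exact iht _ h hs ⟨_, hsa⟩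
      | appCR h => exact ihs _ h (hX.red hs h)

theorem cl_case {sg : Sign} {X Y Z : Tm → Prop} (hX : IsCand X) (hY : IsCand Y) (hZ : IsCand Z)
    {t s u : Tm} {P Q : MProp} (ht : Cl (WInj sg X Y) t)
    (hs : ∀ w, X w → Z (Tm.subst s 0 w)) (hu : ∀ w, Y w → Z (Tm.subst u 0 w)) :
    Z (.case sg t P s Q u) := by
  have h2 : SN s := (hZ.sn (hs _ (hX.var 0))).of_subst
  have h3 : SN u := (hZ.sn (hu _ (hY.var 0))).of_subst
  induction ht generalizing s u with
  | @intro t hd _ iht =>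
    induction h2 generalizing u with
    | intro s hsa ihs =>
      induction h3 with
      | intro u hua ihu =>
        refine hZ.neutral trivial fun r hr => ?_
        cases hr with
        | case1 =>
          rcases hd with hd | ⟨_, _, e, h⟩
          · exact hd.elim
          · cases e; exact hs _ h
        | case2 =>
          rcases hd with hd | ⟨_, _, e, h⟩
          · exact hd.elim
          · cases e; exact hu _ h
        | caseC1 h => exact iht _ h hs hu ⟨_, hsa⟩ ⟨_, hua⟩
        | caseC2 h => exact ihs _ h (fun w hw => hZ.red (hs w hw) (h.subst w)) hu ⟨_, hua⟩
        | caseC3 h => exact ihu _ h (fun w hw => hZ.red (hu w hw) (h.subst w))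

/-! ### The absurdity -/

/-- The steps that contract `abs_Q(t,s)` at the root. -/
inductive RootAbs (Q : MProp) : Tm → Tm → Tm → Prop
  | pairInj {sg sg' i t₁ t₂ s} : sg' = sg.flip →
      RootAbs Q (.pair sg t₁ t₂) (.inj sg' i s) (absE Q sg (bif i then t₂ else t₁) s)
  | injPair {sg sg' i t s₁ s₂} : sg' = sg.flip →
      RootAbs Q (.inj sg i t) (.pair sg' s₁ s₂) (absE Q sg t (bif i then s₂ else s₁))
  | neg {sg sg' t s} : sg' = sg.flip →
      RootAbs Q (.negi sg t) (.negi sg' s) (absE Q sg' t s)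

theorem red_abs_inv {Q : MProp} {t s r : Tm} (h : Red (.abs Q t s) r) :
    RootAbs Q t s r ∨ (∃ t', Red t t' ∧ r = .abs Q t' s) ∨ (∃ s', Red s s' ∧ r = .abs Q t s') := by
  cases h with
  | absPairInj1 => exact .inl (.pairInj (i := false) rfl)
  | absPairInj2 => exact .inl (.pairInj (i := true) rfl)
  | absInjPair1 => exact .inl (.injPair (i := false) rfl)
  | absInjPair2 => exact .inl (.injPair (i := true) rfl)
  | absNeg => exact .inl (.neg rfl)
  | absCL h => exact .inr (.inl ⟨_, h, rfl⟩)
  | absCR h => exact .inr (.inr ⟨_, h, rfl⟩)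

theorem sn_abs_of_root {Q : MProp} {W W' : Tm → Prop}
    (H : ∀ t s r, W t → W' s → RootAbs Q t s r → SN r) {t s : Tm} (ht : Cl W t) (hs : Cl W' s) :
    SN (.abs Q t s) := by
  induction ht generalizing s with
  | @intro t hd _ iht =>
    induction hs with
    | @intro s hd' hsa ihs =>
      refine ⟨_, fun r hr => ?_⟩
      rcases red_abs_inv hr with hr | ⟨t', h, rfl⟩ | ⟨s', h, rfl⟩
      · have hW : W t := hd.resolve_left (by cases hr <;> exact id)
        have hW' : W' s := hd'.resolve_left (by cases hr <;> exact id)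
        exact H _ _ _ hW hW' hr
      · exact iht _ h (.intro hd' hsa)
      · exact ihs _ h

/-- `abs` is strongly normalizing on opposite strong candidates of `A`. -/
def AbsSN (A : PureProp) : Prop :=
  ∀ Q sg t s, strongInterp A sg t → strongInterp A sg.flip s → SN (.abs Q t s)

theorem Sign.flip_flip (sg : Sign) : sg.flip.flip = sg := by cases sg <;> rfl

theorem classical_app {A : PureProp} {sg : Sign} {t s : Tm}
    (ht : classicalInterp (strongInterp A) sg t)
    (hs : classicalInterp (strongInterp A) sg.flip s) : strongInterp A sg (.app sg t s) := by
  rw [classicalInterp_eq] at ht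
  exact cl_app (isCand_classical _ _) (isCand_strong _ _) ht hs

theorem AbsSN.absE {A : PureProp} (hA : AbsSN A) {Q : MProp} {sg : Sign} {t s : Tm}
    (ht : classicalInterp (strongInterp A) sg t)
    (hs : classicalInterp (strongInterp A) sg.flip s) : SN (absE Q sg t s) :=
  hA _ sg _ _ (classical_app ht hs) (classical_app hs (by rwa [Sign.flip_flip]))

theorem sn_abs_pairInj {A B : PureProp} (hA : AbsSN A) (hB : AbsSN B) {Q : MProp} {sg : Sign}
    {t s : Tm}
    (ht : Cl (WPair sg (classicalInterp (strongInterp A) sg)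
      (classicalInterp (strongInterp B) sg)) t)
    (hs : Cl (WInj sg.flip (classicalInterp (strongInterp A) sg.flip)
      (classicalInterp (strongInterp B) sg.flip)) s) : SN (.abs Q t s) := by
  refine sn_abs_of_root ?_ ht hs
  rintro _ _ r ⟨t₁, t₂, rfl, h1, h2⟩ ⟨i, u, rfl, hu⟩ hr
  cases hr with
  | pairInj _ =>
    cases i
    · exact hA.absE h1 hu
    · exact hB.absE h2 hu

theorem sn_abs_injPair {A B : PureProp} (hA : AbsSN A) (hB : AbsSN B) {Q : MProp} {sg : Sign}
    {t s : Tm}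
    (ht : Cl (WInj sg (classicalInterp (strongInterp A) sg)
      (classicalInterp (strongInterp B) sg)) t)
    (hs : Cl (WPair sg.flip (classicalInterp (strongInterp A) sg.flip)
      (classicalInterp (strongInterp B) sg.flip)) s) : SN (.abs Q t s) := by
  refine sn_abs_of_root ?_ ht hs
  rintro _ _ r ⟨i, u, rfl, hu⟩ ⟨t₁, t₂, rfl, h1, h2⟩ hr
  cases hr with
  | injPair _ =>
    cases i
    · exact hA.absE hu h1
    · exact hB.absE hu h2

theorem abs_sn (A : PureProp) : AbsSN A := by
  induction A with
  | var n =>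
    intro Q sg t s ht hs
    exact sn_abs_of_root (fun _ _ _ h => h.elim) ht hs
  | conj A B hA hB =>
    intro Q sg t s ht hs
    cases sg
    · exact sn_abs_pairInj (sg := .pos) hA hB ht hs
    · exact sn_abs_injPair (sg := .neg) hA hB ht hs
  | disj A B hA hB =>
    intro Q sg t s ht hs
    cases sg
    · exact sn_abs_injPair (sg := .pos) hA hB ht hs
    · exact sn_abs_pairInj (sg := .neg) hA hB ht hs
  | neg A hA =>
    intro Q sg t s ht hs
    refine sn_abs_of_root ?_ ht hs
    rintro _ _ r ⟨t, rfl, ht⟩ ⟨s, rfl, hs⟩ hr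
    cases hr with
    | neg _ => exact hA.absE ht hs

/-- Every reduct of `abs_Q(t,s)` is again an `abs_Q`, so strong normalization alone puts the
term in every candidate. -/
theorem IsCand.abs {X : Tm → Prop} (hX : IsCand X) {Q : MProp} {t s : Tm}
    (h : SN (.abs Q t s)) : X (.abs Q t s) := by
  generalize hu : Tm.abs Q t s = u at h
  induction h generalizing t s with
  | intro u _ ih =>
    subst hu
    refine hX.neutral trivial fun r hr => ?_
    have hshape : ∃ t' s', Tm.abs Q t' s' = r := by
      rcases red_abs_inv hr with h | ⟨t', _, rfl⟩ | ⟨s', _, rfl⟩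
      · cases h <;> exact ⟨_, _, rfl⟩
      · exact ⟨_, _, rfl⟩
      · exact ⟨_, _, rfl⟩
    obtain ⟨t', s', e⟩ := hshape
    exact ih r hr e

/-! ### The fundamental lemma -/

/-- The substitution `σ` sends each variable of `Γ` into the candidate of its type. -/
def RedSub (Γ : List MProp) (σ : ℕ → Tm) : Prop :=
  ∀ n P, Γ[n]? = some P → interp P (σ n)

theorem RedSub.cons {Γ : List MProp} {σ : ℕ → Tm} (h : RedSub Γ σ) {P : MProp} {s : Tm}
    (hs : interp P s) : RedSub (P :: Γ) (consSub s σ) := by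
  intro n Q hn
  cases n with
  | zero =>
    simp only [List.getElem?_cons_zero, Option.some.injEq] at hn
    exact hn ▸ hs
  | succ n => exact h n Q (by simpa using hn)

theorem fundamental {Γ : List MProp} {t : Tm} {P : MProp} (h : TJ Γ t P) :
    ∀ σ, RedSub Γ σ → interp P (t.psub σ) := by
  induction h with
  | var h => exact fun σ hσ => hσ _ _ h
  | @absT Γ t s P Q hP _ _ iht ihs =>
    intro σ hσ
    refine (isCand_interp Q).abs ?_
    have h1 := iht σ hσ
    have h2 := ihs σ hσ
    cases P with
    | sp A => exact abs_sn A Q .pos _ _ h1 h2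
    | sn A => exact abs_sn A Q .neg _ _ h1 h2
    | cp A => exact hP.elim
    | cn A => exact hP.elim
  | pairP _ _ h1 h2 =>
    exact fun σ hσ => cl_pair (isCand_classical _ _) (isCand_classical _ _) (h1 σ hσ) (h2 σ hσ)
  | pairN _ _ h1 h2 =>
    exact fun σ hσ => cl_pair (isCand_classical _ _) (isCand_classical _ _) (h1 σ hσ) (h2 σ hσ)
  | projP1 _ h =>
    exact fun σ hσ => (cl_proj (isCand_classical _ _) (isCand_classical _ _) (h σ hσ)).1
  | projP2 _ h =>
    exact fun σ hσ => (cl_proj (isCand_classical _ _) (isCand_classical _ _) (h σ hσ)).2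
  | projN1 _ h =>
    exact fun σ hσ => (cl_proj (isCand_classical _ _) (isCand_classical _ _) (h σ hσ)).1
  | projN2 _ h =>
    exact fun σ hσ => (cl_proj (isCand_classical _ _) (isCand_classical _ _) (h σ hσ)).2
  | injP1 _ h =>
    exact fun σ hσ => cl_inj (i := false) (isCand_classical _ _) (isCand_classical _ _) (h σ hσ)
  | injP2 _ h =>
    exact fun σ hσ => cl_inj (i := true) (isCand_classical _ _) (isCand_classical _ _) (h σ hσ)
  | injN1 _ h =>
    exact fun σ hσ => cl_inj (i := false) (isCand_classical _ _) (isCand_classical _ _) (h σ hσ)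
  | injN2 _ h =>
    exact fun σ hσ => cl_inj (i := true) (isCand_classical _ _) (isCand_classical _ _) (h σ hσ)
  | @caseP Γ t s u A B P _ _ _ ht hs hu =>
    intro σ hσ
    refine cl_case (isCand_classical _ _) (isCand_classical _ _) (isCand_interp P) (ht σ hσ)
      (fun w hw => ?_) (fun w hw => ?_)
    · rw [subst_psub_lift]; exact hs _ (hσ.cons hw)
    · rw [subst_psub_lift]; exact hu _ (hσ.cons hw)
  | @caseN Γ t s u A B P _ _ _ ht hs hu =>
    intro σ hσ
    refine cl_case (isCand_classical _ _) (isCand_classical _ _) (isCand_interp P) (ht σ hσ)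
      (fun w hw => ?_) (fun w hw => ?_)
    · rw [subst_psub_lift]; exact hs _ (hσ.cons hw)
    · rw [subst_psub_lift]; exact hu _ (hσ.cons hw)
  | negiP _ h => exact fun σ hσ => cl_negi (isCand_classical _ _) (h σ hσ)
  | negiN _ h => exact fun σ hσ => cl_negi (isCand_classical _ _) (h σ hσ)
  | negeP _ h => exact fun σ hσ => cl_nege (isCand_classical _ _) (h σ hσ)
  | negeN _ h => exact fun σ hσ => cl_nege (isCand_classical _ _) (h σ hσ)
  | @lamP Γ t A _ ih =>
    intro σ hσ
    change classicalInterp (strongInterp A) .pos _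
    rw [classicalInterp_eq]
    refine cl_lam (isCand_classical _ _) (isCand_strong _ _) fun s hs => ?_
    rw [subst_psub_lift]
    exact ih _ (hσ.cons (P := .cn A) hs)
  | @lamN Γ t A _ ih =>
    intro σ hσ
    change classicalInterp (strongInterp A) .neg _
    rw [classicalInterp_eq]
    refine cl_lam (isCand_classical _ _) (isCand_strong _ _) fun s hs => ?_
    rw [subst_psub_lift]
    exact ih _ (hσ.cons (P := .cp A) hs)
  | @appP Γ t s A _ _ h1 h2 => exact fun σ hσ => classical_app (sg := .pos) (h1 σ hσ) (h2 σ hσ)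
  | @appN Γ t s A _ _ h1 h2 => exact fun σ hσ => classical_app (sg := .neg) (h1 σ hσ) (h2 σ hσ)

theorem sn_of_typable {Γ : List MProp} {t : Tm} {P : MProp} (h : TJ Γ t P) : SN t :=
  ((isCand_interp P).sn (fundamental h Tm.var fun n Q _ => (isCand_interp Q).var n)).of_psub

/-- Strong normalization of λPRK: no infinite reduction sequence from a typable term. -/
theorem lambdaPRK_strongly_normalizing {Γ : List MProp} {t : Tm} {P : MProp}
    (ht : TJ Γ t P) :
    ¬ ∃ f : ℕ → Tm, f 0 = t ∧ ∀ n, Red (f n) (f (n + 1)) := by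
  rintro ⟨f, h0, hf⟩
  have key : ∀ u, SN u → ∀ n, f n ≠ u := by
    intro u hu
    induction hu with
    | intro u _ ih =>
      rintro n rfl
      exact ih _ (hf n) (n + 1) rfl
  exact key t (sn_of_typable ht) 0 h0
end

section
/- PRK is a conservative extension of classical propositional logic: define χ(A⊕)=χ(A⁺)=A and χ(A⊖)=χ(A⁻)=¬A. If P₁,…,Pₙ ⊢ Q is derivable in PRK, then χ(Q) is a classical (truth-table) consequence of χ(P₁),…,χ(Pₙ): for every valuation v assigning a Boolean truth value to each propositional variable (extended to pure propositions by the usual truth tables for ∧, ∨, ¬), if v satisfies each χ(Pᵢ) then v satisfies χ(Q). -/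
/-- Derivability in system PRK (natural deduction), Γ a finite set of moded propositions. -/
inductive PRK : Finset MProp → MProp → Prop
  | ax {Γ : Finset MProp} {P : MProp} : P ∈ Γ → PRK Γ P
  | abs {Γ : Finset MProp} {P Q : MProp} :
      P.isStrong → PRK Γ P → PRK Γ P.opp → PRK Γ Q
  | iConjP {Γ A B} : PRK Γ (MProp.cp A) → PRK Γ (MProp.cp B) → PRK Γ (MProp.sp (PureProp.conj A B))
  | eConjP1 {Γ A B} : PRK Γ (MProp.sp (PureProp.conj A B)) → PRK Γ (MProp.cp A)
  | eConjP2 {Γ A B} : PRK Γ (MProp.sp (PureProp.conj A B)) → PRK Γ (MProp.cp B)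
  | iDisjP1 {Γ A B} : PRK Γ (MProp.cp A) → PRK Γ (MProp.sp (PureProp.disj A B))
  | iDisjP2 {Γ A B} : PRK Γ (MProp.cp B) → PRK Γ (MProp.sp (PureProp.disj A B))
  | eDisjP {Γ A B P} : PRK Γ (MProp.sp (PureProp.disj A B)) →
      PRK (insert (MProp.cp A) Γ) P → PRK (insert (MProp.cp B) Γ) P → PRK Γ P
  | iNegP {Γ A} : PRK Γ (MProp.cn A) → PRK Γ (MProp.sp (PureProp.neg A))
  | eNegP {Γ A} : PRK Γ (MProp.sp (PureProp.neg A)) → PRK Γ (MProp.cn A)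
  | icP {Γ A} : PRK (insert (MProp.cn A) Γ) (MProp.sp A) → PRK Γ (MProp.cp A)
  | ecP {Γ A} : PRK Γ (MProp.cp A) → PRK Γ (MProp.cn A) → PRK Γ (MProp.sp A)
  | iDisjN {Γ A B} : PRK Γ (MProp.cn A) → PRK Γ (MProp.cn B) → PRK Γ (MProp.sn (PureProp.disj A B))
  | eDisjN1 {Γ A B} : PRK Γ (MProp.sn (PureProp.disj A B)) → PRK Γ (MProp.cn A)
  | eDisjN2 {Γ A B} : PRK Γ (MProp.sn (PureProp.disj A B)) → PRK Γ (MProp.cn B)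
  | iConjN1 {Γ A B} : PRK Γ (MProp.cn A) → PRK Γ (MProp.sn (PureProp.conj A B))
  | iConjN2 {Γ A B} : PRK Γ (MProp.cn B) → PRK Γ (MProp.sn (PureProp.conj A B))
  | eConjN {Γ A B P} : PRK Γ (MProp.sn (PureProp.conj A B)) →
      PRK (insert (MProp.cn A) Γ) P → PRK (insert (MProp.cn B) Γ) P → PRK Γ P
  | iNegN {Γ A} : PRK Γ (MProp.cp A) → PRK Γ (MProp.sn (PureProp.neg A))
  | eNegN {Γ A} : PRK Γ (MProp.sn (PureProp.neg A)) → PRK Γ (MProp.cp A)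
  | icN {Γ A} : PRK (insert (MProp.cp A) Γ) (MProp.sn A) → PRK Γ (MProp.cn A)
  | ecN {Γ A} : PRK Γ (MProp.cn A) → PRK Γ (MProp.cp A) → PRK Γ (MProp.sn A)

/-- χ maps a moded proposition to a pure proposition: χ(A⁺)=χ(A⊕)=A, χ(A⁻)=χ(A⊖)=¬A. -/
def chi : MProp → PureProp
  | .sp A => A
  | .cp A => A
  | .sn A => .neg A
  | .cn A => .neg A

/-- Truth-table evaluation of pure propositions under a Boolean valuation. -/
def PureProp.eval (v : ℕ → Bool) : PureProp → Bool
  | .var a => v a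
  | .conj A B => A.eval v && B.eval v
  | .disj A B => A.eval v || B.eval v
  | .neg A => ! A.eval v

/-- PRK is a conservative extension of classical propositional logic. -/
theorem prk_conservative (Γ : Finset MProp) (Q : MProp) (h : PRK Γ Q)
    (v : ℕ → Bool) (hv : ∀ P ∈ Γ, (chi P).eval v = true) :
    (chi Q).eval v = true := by
  -- Every rule is sound under `χ`. For (IC⁺) and (IC⁻) this is a case split on the truth value
  -- of `A`: the discharged hypothesis is available exactly when the conclusion would fail.
  induction h with
  | ax hP => exact hv _ hP
  | @abs Γ P Q hs _ _ ih₁ ih₂ =>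
    have h₁ := ih₁ hv
    have h₂ := ih₂ hv
    cases P <;> simp_all [chi, MProp.opp, PureProp.eval]
  | @eDisjP Γ A B P _ _ _ ih ihA ihB =>
    have h := ih hv
    simp only [chi, PureProp.eval, Bool.or_eq_true] at h
    rcases h with h | h
    · exact ihA (Finset.forall_mem_insert _ _ _ |>.2 ⟨h, hv⟩)
    · exact ihB (Finset.forall_mem_insert _ _ _ |>.2 ⟨h, hv⟩)
  | @eConjN Γ A B P _ _ _ ih ihA ihB =>
    have h := ih hv
    simp only [chi, PureProp.eval, Bool.not_and, Bool.or_eq_true] at h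
    rcases h with h | h
    · exact ihA (Finset.forall_mem_insert _ _ _ |>.2 ⟨h, hv⟩)
    · exact ihB (Finset.forall_mem_insert _ _ _ |>.2 ⟨h, hv⟩)
  | @icP Γ A _ ih =>
    by_contra hA
    exact hA (ih (Finset.forall_mem_insert _ _ _ |>.2
      ⟨by simpa [chi, PureProp.eval] using hA, hv⟩))
  | @icN Γ A _ ih =>
    by_contra hA
    exact hA (ih (Finset.forall_mem_insert _ _ _ |>.2
      ⟨by simpa [chi, PureProp.eval] using hA, hv⟩))
  | _ => simp_all [chi, PureProp.eval]
end
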